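/- arXiv:1806.02214 — 2 statements merged into one kernel-verified Lean document; each statement's English description precedes it below -/
import Mathlib

section
/- Let E be a Banach space, T > 0, and let K be a Volterra kernel on [0,T] satisfying Condition (A) with exponent α ∈ [0, 1/4), such that for each s ∈ (0,T) and each a with s < a ≤ T one has K(T,s) − K(a,s) = ∫_a^T (∂K(r,s)/∂r) dr. Let φ: [0,T] → E be λ-Hölder continuous with λ > α, and let a ∈ (0,T]. Then for every s ∈ (0,T), K*(φ·1_{[0,a)})(s) = 1_{[0,a)}(s) · ( φ(s) K(a,s) + ∫_s^a [φ(r) − φ(s)] (∂K(r,s)/∂r) dr ). -/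
open MeasureTheory Set

noncomputable section

namespace YS

variable {E : Type*} [NormedAddCommGroup E] [NormedSpace ℝ E]

/-- A Volterra kernel: a measurable `K : ℝ² → ℝ` with `K t s = 0` whenever `s ≥ t`. -/
def IsVolterraKernel (K : ℝ → ℝ → ℝ) : Prop :=
  Measurable (Function.uncurry K) ∧ ∀ t s : ℝ, t ≤ s → K t s = 0

/-- Condition (A) with exponent `α` and constant `C`; here `K' t s` denotes the partial
derivative `∂K(t,s)/∂t`, whose existence is part of the condition. -/
def CondA (T α C : ℝ) (K K' : ℝ → ℝ → ℝ) : Prop :=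
  (∀ s t : ℝ, 0 < s → s < t → t ≤ T → |K t s| ≤ C * s ^ (-α) * (t - s) ^ (-α)) ∧
  ∀ s t : ℝ, 0 < s → s < t → t ≤ T →
    HasDerivAt (fun r => K r s) (K' t s) t ∧ |K' t s| ≤ C * (t - s) ^ (-(α + 1))

/-- The operator `𝒦*`:  `(𝒦*φ)(s) = φ(s)K(T,s) + ∫_s^T [φ(r) − φ(s)] ∂K(r,s)/∂r dr`. -/
def Kstar (T : ℝ) (K K' : ℝ → ℝ → ℝ) (φ : ℝ → E) (s : ℝ) : E :=
  K T s • φ s + ∫ r in s..T, K' r s • (φ r - φ s)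

/-- The operator `A^K`. -/
def AK (T : ℝ) (K' : ℝ → ℝ → ℝ) (φ : ℝ → E) (s : ℝ) : E :=
  ∫ r in s..T, K' r s • (φ r - φ s)

/-- Rectangular increment `f(u₁,u₂;v₁,v₂)`. -/
def rectInc (ψ : ℝ → ℝ → E) (u₁ u₂ v₁ v₂ : ℝ) : E :=
  ψ u₁ v₁ + ψ u₂ v₂ - ψ u₁ v₂ - ψ u₂ v₁

/-- The operator `B^K`. -/
def BK (T : ℝ) (K' : ℝ → ℝ → ℝ) (ψ : ℝ → ℝ → E) (u v : ℝ) : E :=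
  ∫ r₂ in v..T, ∫ r₁ in u..T, (K' r₁ u * K' r₂ v) • rectInc ψ u r₁ v r₂

/-- The operator `𝒦* ⊗ 𝒦*`. -/
def KstarT (T : ℝ) (K K' : ℝ → ℝ → ℝ) (ψ : ℝ → ℝ → E) (u v : ℝ) : E :=
  (K T u * K T v) • ψ u v + K T v • AK T K' (fun x => ψ x v) u +
    K T u • AK T K' (fun y => ψ u y) v + BK T K' ψ u v

/-- A partition `0 = s₀ < s₁ < ⋯ < s_n = T` of `[0,T]`. -/
structure Partition (T : ℝ) where
  n : ℕ
  pts : ℕ → ℝ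
  n_pos : 0 < n
  first : pts 0 = 0
  last : pts n = T
  lt : ∀ i < n, pts i < pts (i + 1)

/-- Mesh of a partition: the largest increment. -/
def Partition.mesh {T : ℝ} (P : Partition T) : ℝ :=
  (Finset.range P.n).sup' (Finset.nonempty_range_iff.mpr P.n_pos.ne')
    fun i => P.pts (i + 1) - P.pts i

/-- One-dimensional step approximation `φ^π`. -/
def step1 {T : ℝ} (P : Partition T) (φ : ℝ → E) (s : ℝ) : E :=
  ∑ i ∈ Finset.range P.n,
    (Set.Ico (P.pts i) (P.pts (i + 1))).indicator (fun _ => φ (P.pts i)) s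

/-- Two-dimensional step approximation `ψ^π` for the grid partition `P × Q`. -/
def step2 {T : ℝ} (P Q : Partition T) (ψ : ℝ → ℝ → E) (u v : ℝ) : E :=
  ∑ i ∈ Finset.range P.n, ∑ j ∈ Finset.range Q.n,
    ((Set.Ico (P.pts i) (P.pts (i + 1))) ×ˢ (Set.Ico (Q.pts j) (Q.pts (j + 1)))).indicator
      (fun _ => ψ (P.pts i) (Q.pts j)) (u, v)

/-- `λ`-Hölder continuity on `[0,T]` with constant `C`. -/
def IsHolderWith (T lam C : ℝ) (φ : ℝ → E) : Prop :=
  ∀ t₁ ∈ Icc (0:ℝ) T, ∀ t₂ ∈ Icc (0:ℝ) T, ‖φ t₁ - φ t₂‖ ≤ C * |t₁ - t₂| ^ lam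

/-- `λ`-Hölder continuity on `[0,T]`. -/
def IsHolder (T lam : ℝ) (φ : ℝ → E) : Prop := ∃ C : ℝ, IsHolderWith T lam C φ

/-- `λ`-Hölder bi-continuity with constant `C`. -/
def IsHolderBiWith (T lam C : ℝ) (ψ : ℝ → ℝ → E) : Prop :=
  (∀ u₁ ∈ Icc (0:ℝ) T, ∀ u₂ ∈ Icc (0:ℝ) T, ∀ v ∈ Icc (0:ℝ) T,
      ‖ψ u₂ v - ψ u₁ v‖ ≤ C * |u₂ - u₁| ^ lam) ∧
  ∀ u ∈ Icc (0:ℝ) T, ∀ v₁ ∈ Icc (0:ℝ) T, ∀ v₂ ∈ Icc (0:ℝ) T,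
      ‖ψ u v₂ - ψ u v₁‖ ≤ C * |v₂ - v₁| ^ lam

/-- `λ`-Hölder bi-continuity. -/
def IsHolderBi (T lam : ℝ) (ψ : ℝ → ℝ → E) : Prop := ∃ C : ℝ, IsHolderBiWith T lam C ψ

/-- Strong `λ`-Hölder bi-continuity with constant `C`. -/
def IsStrongHolderBiWith (T lam C : ℝ) (ψ : ℝ → ℝ → E) : Prop :=
  IsHolderBiWith T lam C ψ ∧
  ∀ u₁ ∈ Icc (0:ℝ) T, ∀ u₂ ∈ Icc (0:ℝ) T, ∀ v₁ ∈ Icc (0:ℝ) T, ∀ v₂ ∈ Icc (0:ℝ) T,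
    ‖rectInc ψ u₁ u₂ v₁ v₂‖ ≤ C * |u₂ - u₁| ^ lam * |v₂ - v₁| ^ lam

/-- Strong `λ`-Hölder bi-continuity. -/
def IsStrongHolderBi (T lam : ℝ) (ψ : ℝ → ℝ → E) : Prop :=
  ∃ C : ℝ, IsStrongHolderBiWith T lam C ψ

/-- The covariance function `R(s,t) = ∫_0^{s∧t} K(t,r)K(s,r) dr` of the Volterra process. -/
def covR (K : ℝ → ℝ → ℝ) (s t : ℝ) : ℝ := ∫ r in (0:ℝ)..(min s t), K t r * K s r

/-- The 2D Riemann–Stieltjes sum of `f` against `g` over the grid partition `P × Q`. -/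
def RSsum {T : ℝ} (P Q : Partition T) (f g : ℝ → ℝ → ℝ) : ℝ :=
  ∑ i ∈ Finset.range P.n, ∑ j ∈ Finset.range Q.n,
    f (P.pts i) (Q.pts j) *
      rectInc g (P.pts i) (P.pts (i + 1)) (Q.pts j) (Q.pts (j + 1))

/-!
For `s < a`, cutting the integral defining `𝒦*` at `a` and applying the fundamental theorem of
calculus to `K(·, s)` on `[a, T]` gives, with `𝒦*_a` the operator over `[0, a]`,
`(𝒦*ψ)(s) = (𝒦*_a ψ)(s) + ∫_a^T ψ(r) ∂K(r,s)/∂r dr`. For `ψ = φ·1_{[0,a)}` the last integral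
vanishes, and `𝒦*_a` only sees `ψ` on `[s, a)`, where it is `φ`. Cutting is legitimate because
`|∂K(r,s)/∂r| ‖φ(r) - φ(s)‖ = O((r - s)^(λ - α - 1))` is integrable at `s`, as
`λ - α - 1 > -1`.
-/

theorem aestronglyMeasurable_of_hasDerivAt {F : Type*} [NormedAddCommGroup F] [NormedSpace ℝ F]
    [CompleteSpace F] {f f' : ℝ → F} {S : Set ℝ} (hS : MeasurableSet S)
    (hderiv : ∀ t ∈ S, HasDerivAt f (f' t) t) (μ : Measure ℝ) :
    AEStronglyMeasurable f' (μ.restrict S) := by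
  refine (aestronglyMeasurable_deriv f _).congr ?_
  filter_upwards [ae_restrict_mem hS] with t ht using (hderiv t ht).deriv

theorem intervalIntegrable_of_hasDerivAt_of_norm_le {F : Type*} [NormedAddCommGroup F]
    [NormedSpace ℝ F] [CompleteSpace F] {a b : ℝ} {f f' : ℝ → F} {g : ℝ → ℝ} {μ : Measure ℝ}
    (hg : IntervalIntegrable g μ a b) (hderiv : ∀ t ∈ uIoc a b, HasDerivAt f (f' t) t)
    (hbound : ∀ t ∈ uIoc a b, ‖f' t‖ ≤ g t) : IntervalIntegrable f' μ a b := by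
  refine hg.mono_fun' (aestronglyMeasurable_of_hasDerivAt measurableSet_uIoc hderiv μ) ?_
  filter_upwards [ae_restrict_mem measurableSet_uIoc] with t ht using hbound t ht

theorem intervalIntegrable_sub_rpow {p : ℝ} (hp : -1 < p) (a b c : ℝ) :
    IntervalIntegrable (fun r => (r - c) ^ p) volume a b := by
  simpa using (intervalIntegral.intervalIntegrable_rpow' (a := a - c) (b := b - c)
    hp).comp_sub_right c

theorem intervalIntegrable_sub_rpow_of_notMem {a b c : ℝ} (p : ℝ) (hc : c ∉ uIcc a b) :
    IntervalIntegrable (fun r => (r - c) ^ p) volume a b :=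
  ((continuousOn_id.sub continuousOn_const).rpow_const fun _ hr =>
    Or.inl (sub_ne_zero.mpr (ne_of_mem_of_not_mem hr hc))).intervalIntegrable

open Filter Topology in
theorem IsHolderWith.continuousOn {F : Type*} [NormedAddCommGroup F] {T lam C : ℝ} {φ : ℝ → F}
    (hφ : IsHolderWith T lam C φ) (hlam : 0 < lam) : ContinuousOn φ (Icc 0 T) := by
  intro t ht
  have hlim : Tendsto (fun r => C * |r - t| ^ lam) (𝓝[Icc 0 T] t) (𝓝 0) := by
    have hcont : Continuous fun r : ℝ => C * |r - t| ^ lam := by fun_prop (disch := exact hlam.le)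
    simpa [Real.zero_rpow hlam.ne'] using (hcont.tendsto t).mono_left nhdsWithin_le_nhds
  refine tendsto_iff_norm_sub_tendsto_zero.mpr
    (squeeze_zero' (.of_forall fun _ => norm_nonneg _) ?_ hlim)
  filter_upwards [self_mem_nhdsWithin] with r hr using hφ r hr t ht

theorem intervalIntegrable_smul_of_le_sub_rpow {s b C D p q : ℝ} {f : ℝ → ℝ} {g : ℝ → E}
    (hsb : s ≤ b) (hpq : -1 < p + q)
    (hf : AEStronglyMeasurable f (volume.restrict (Ioc s b)))
    (hg : AEStronglyMeasurable g (volume.restrict (Ioc s b)))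
    (hfC : ∀ r ∈ Ioc s b, |f r| ≤ C * (r - s) ^ p)
    (hgD : ∀ r ∈ Ioc s b, ‖g r‖ ≤ D * (r - s) ^ q) :
    IntervalIntegrable (fun r => f r • g r) volume s b := by
  have hmajorant : IntervalIntegrable (fun r => C * D * (r - s) ^ (p + q)) volume s b :=
    (intervalIntegrable_sub_rpow hpq s b s).const_mul (C * D)
  rw [← uIoc_of_le hsb] at hf hg
  refine hmajorant.mono_fun' (hf.smul hg) ?_
  filter_upwards [ae_restrict_mem measurableSet_uIoc] with r hr
  rw [uIoc_of_le hsb] at hr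
  calc ‖f r • g r‖ = |f r| * ‖g r‖ := by rw [norm_smul, Real.norm_eq_abs]
    _ ≤ (C * (r - s) ^ p) * (D * (r - s) ^ q) :=
      mul_le_mul (hfC r hr) (hgD r hr) (norm_nonneg _) ((abs_nonneg _).trans (hfC r hr))
    _ = C * D * (r - s) ^ (p + q) := by
      rw [Real.rpow_add (sub_pos.mpr hr.1)]; ring

theorem IsHolder.intervalIntegrable_smul_sub {T lam α C s a : ℝ} {k k' : ℝ → ℝ} {φ : ℝ → E}
    (hφ : IsHolder T lam φ) (hlam : 0 < lam) (hαlam : α < lam) (hs : 0 ≤ s) (hsa : s ≤ a)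
    (haT : a ≤ T) (hderiv : ∀ t ∈ Ioc s a, HasDerivAt k (k' t) t)
    (hbound : ∀ t ∈ Ioc s a, |k' t| ≤ C * (t - s) ^ (-(α + 1))) :
    IntervalIntegrable (fun r => k' r • (φ r - φ s)) volume s a := by
  obtain ⟨D, hD⟩ := hφ
  have hsub : Ioc s a ⊆ Icc 0 T := fun r hr => ⟨hs.trans hr.1.le, hr.2.trans haT⟩
  refine intervalIntegrable_smul_of_le_sub_rpow hsa (p := -(α + 1)) (q := lam) (D := D)
    (by linarith) (aestronglyMeasurable_of_hasDerivAt measurableSet_Ioc hderiv volume)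
    ((((hD.continuousOn hlam).mono hsub).sub continuousOn_const).aestronglyMeasurable
      measurableSet_Ioc) hbound fun r hr => ?_
  simpa only [abs_of_pos (sub_pos.mpr hr.1)] using hD r (hsub hr) s ⟨hs, hsa.trans haT⟩

section Kstar

variable {T s a : ℝ} {K K' : ℝ → ℝ → ℝ} {φ ψ : ℝ → E}

theorem Kstar_congr (hsa : s < a) (h : EqOn φ ψ (Ico s a)) :
    Kstar a K K' φ s = Kstar a K K' ψ s := by
  have hs : φ s = ψ s := h (left_mem_Ico.mpr hsa)
  unfold Kstar
  rw [hs, intervalIntegral.integral_congr_Ioo_of_le hsa.le]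
  intro r hr
  simp only [h (Ioo_subset_Ico_self hr)]

theorem Kstar_eq_zero (h : EqOn φ 0 (uIcc s T)) : Kstar T K K' φ s = 0 := by
  have hs : φ s = 0 := h left_mem_uIcc
  have hint : EqOn (fun r => K' r s • (φ r - φ s)) (fun _ => 0) (uIcc s T) :=
    fun r hr => by simp [h hr, hs]
  rw [Kstar, intervalIntegral.integral_congr hint, intervalIntegral.integral_zero, hs, smul_zero,
    add_zero]

theorem Kstar_eq_Kstar_add_integral [CompleteSpace E]
    (hinc : IntervalIntegrable (fun r => K' r s • (φ r - φ s)) volume s a)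
    (hK' : IntervalIntegrable (fun r => K' r s) volume a T)
    (hK'φ : IntervalIntegrable (fun r => K' r s • φ r) volume a T)
    (hFTC : ∫ r in a..T, K' r s = K T s - K a s) :
    Kstar T K K' φ s = Kstar a K K' φ s + ∫ r in a..T, K' r s • φ r := by
  have hconst : IntervalIntegrable (fun r => K' r s • φ s) volume a T :=
    ⟨hK'.1.smul_const (φ s), hK'.2.smul_const (φ s)⟩
  have htail : ∫ r in a..T, K' r s • (φ r - φ s) =
      (∫ r in a..T, K' r s • φ r) - (K T s - K a s) • φ s := by
    simp only [smul_sub]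
    rw [intervalIntegral.integral_sub hK'φ hconst, intervalIntegral.integral_smul_const, hFTC]
  have htail_int : IntervalIntegrable (fun r => K' r s • (φ r - φ s)) volume a T := by
    simpa only [smul_sub] using hK'φ.sub hconst
  rw [Kstar, Kstar, ← intervalIntegral.integral_add_adjacent_intervals hinc htail_int, htail,
    sub_smul]
  abel

theorem Kstar_indicator_of_lt [CompleteSpace E] (hs : 0 ≤ s) (hsa : s < a) (haT : a ≤ T)
    (hinc : IntervalIntegrable (fun r => K' r s • (φ r - φ s)) volume s a)
    (hK' : IntervalIntegrable (fun r => K' r s) volume a T)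
    (hFTC : ∫ r in a..T, K' r s = K T s - K a s) :
    Kstar T K K' ((Ico 0 a).indicator φ) s = Kstar a K K' φ s := by
  set ψ := (Ico 0 a).indicator φ
  have hψφ : EqOn ψ φ (Ico s a) := fun r hr =>
    indicator_of_mem (show r ∈ Ico 0 a from ⟨hs.trans hr.1, hr.2⟩) φ
  have hψ_tail : EqOn (fun r => K' r s • ψ r) (fun _ => 0) (uIcc a T) := by
    intro r hr
    rw [uIcc_of_le haT] at hr
    simp only [ψ, indicator_of_notMem (fun h : r ∈ Ico 0 a => h.2.not_ge hr.1), smul_zero]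
  have hψ_inc : IntervalIntegrable (fun r => K' r s • (ψ r - ψ s)) volume s a := by
    refine hinc.congr_uIoo fun r hr => ?_
    rw [uIoo_of_le hsa.le] at hr
    simp only [hψφ (Ioo_subset_Ico_self hr), hψφ (left_mem_Ico.mpr hsa)]
  have hψ_tail_int : IntervalIntegrable (fun r => K' r s • ψ r) volume a T :=
    intervalIntegrable_const.congr (hψ_tail.symm.mono uIoc_subset_uIcc)
  calc Kstar T K K' ψ s = Kstar a K K' ψ s + ∫ r in a..T, K' r s • ψ r :=
        Kstar_eq_Kstar_add_integral hψ_inc hK' hψ_tail_int hFTC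
    _ = Kstar a K K' ψ s := by
        rw [intervalIntegral.integral_congr hψ_tail, intervalIntegral.integral_zero, add_zero]
    _ = Kstar a K K' φ s := Kstar_congr hsa hψφ

end Kstar

theorem kstar_indicator_general [CompleteSpace E] {T α lam C s a : ℝ} {K K' : ℝ → ℝ → ℝ}
    {φ : ℝ → E} (hs : s ∈ Icc 0 T) (haT : a ≤ T) (hlam : 0 < lam) (hαlam : α < lam)
    (hφ : IsHolder T lam φ)
    (hderiv : ∀ t ∈ Ioc s T, HasDerivAt (fun r => K r s) (K' t s) t)
    (hbound : ∀ t ∈ Ioc s T, |K' t s| ≤ C * (t - s) ^ (-(α + 1))) :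
    Kstar T K K' ((Ico 0 a).indicator φ) s = (Ico 0 a).indicator (Kstar a K K' φ) s := by
  rcases lt_or_ge s a with hsa | has
  · have hinc : IntervalIntegrable (fun r => K' r s • (φ r - φ s)) volume s a :=
      hφ.intervalIntegrable_smul_sub hlam hαlam hs.1 hsa.le haT
        (fun t ht => hderiv t ⟨ht.1, ht.2.trans haT⟩) fun t ht => hbound t ⟨ht.1, ht.2.trans haT⟩
    have hs_notMem : s ∉ uIcc a T := notMem_uIcc_of_lt hsa (hsa.trans_le haT)
    have htail : uIoc a T ⊆ Ioc s T := uIoc_of_le haT ▸ Ioc_subset_Ioc_left hsa.le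
    have hK' : IntervalIntegrable (fun r => K' r s) volume a T :=
      intervalIntegrable_of_hasDerivAt_of_norm_le
        ((intervalIntegrable_sub_rpow_of_notMem (-(α + 1)) hs_notMem).const_mul C)
        (fun t ht => hderiv t (htail ht)) fun t ht => hbound t (htail ht)
    have hFTC : ∫ r in a..T, K' r s = K T s - K a s := by
      refine intervalIntegral.integral_eq_sub_of_hasDerivAt (f := fun r => K r s)
        (fun t ht => ?_) hK'
      rw [uIcc_of_le haT] at ht
      exact hderiv t ⟨hsa.trans_le ht.1, ht.2⟩
    rw [indicator_of_mem (show s ∈ Ico 0 a from ⟨hs.1, hsa⟩)]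
    exact Kstar_indicator_of_lt hs.1 hsa haT hinc hK' hFTC
  · rw [indicator_of_notMem fun h => h.2.not_ge has]
    refine Kstar_eq_zero fun r hr => indicator_of_notMem (fun h => ?_) φ
    rw [uIcc_of_le hs.2] at hr
    exact h.2.not_ge (has.trans hr.1)

/-- the identity for `𝒦*(φ·1_{[0,a)})`. -/
theorem kstar_indicator {E : Type*} [NormedAddCommGroup E] [NormedSpace ℝ E]
    [CompleteSpace E] (T α lam : ℝ) (hT : 0 < T) (hα : 0 ≤ α) (hα' : α < 1 / 4)
    (K K' : ℝ → ℝ → ℝ) (hK : IsVolterraKernel K) (hA : ∃ C : ℝ, CondA T α C K K')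
    (hFTC : ∀ s a : ℝ, 0 < s → s < a → a ≤ T → K T s - K a s = ∫ r in a..T, K' r s)
    (φ : ℝ → E) (hlam : 0 < lam) (hlam' : lam ≤ 1)
    (hφ : IsHolder T lam φ) (hαlam : α < lam) (a : ℝ) (ha : a ∈ Ioc (0:ℝ) T) :
    ∀ s ∈ Ioo (0:ℝ) T,
      Kstar T K K' ((Ico (0:ℝ) a).indicator φ) s =
        (Ico (0:ℝ) a).indicator
          (fun s' => K a s' • φ s' + ∫ r in s'..a, K' r s' • (φ r - φ s')) s := by
  obtain ⟨C, -, hderiv⟩ := hA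
  exact fun s hs => kstar_indicator_general (Ioo_subset_Icc_self hs) ha.2 hlam hαlam hφ
    (fun t ht => (hderiv s t hs.1 ht.1 ht.2).1) fun t ht => (hderiv s t hs.1 ht.1 ht.2).2

end YS
end
end

section
/- Let T > 0, α ∈ [0, 1/4), and λ ∈ (α, 1]. There is a constant C, depending only on λ, α and T, such that for every partition π = {s_i} of [0,T], ∫_0^T [ Σ_i 1_{[s_i, s_{i+1})}(s) (s − s_i)^λ (s_{i+1} − s)^(−α) s^(−α) ]² ds ≤ C ‖π‖^{2(λ−α)}, where ‖π‖ := max_i (s_{i+1} − s_i). In particular this integral tends to 0 as the mesh of the partition tends to 0. -/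
open MeasureTheory Set

noncomputable section

namespace YS

variable {E : Type*} [NormedAddCommGroup E] [NormedSpace ℝ E]

/-!
On a cell `(a, b)` the factors `(b - s)^(-2α)` and `s^(-2α)` are oppositely ordered, so Chebyshev's
integral inequality bounds the integral of their product by the mean of the first factor,
`(b - a)^(-2α) / (1 - 2α)`, times the integral of the second. The remaining factor `(s - a)^(2λ)` is
at most `(b - a)^(2λ)`. Bounding `(b - a)^(2(λ - α))` by the corresponding power of the mesh and
summing over the cells leaves `∫ s in 0..T, s^(-2α) = T^(1 - 2α) / (1 - 2α)`.
-/

-- Unlike `mul_add_mul_le_mul_add_mul`, this needs no cancellation, so it applies to `ENNReal`.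
theorem mul_add_mul_le_mul_add_mul_of_canonicallyOrderedAdd {R : Type*} [Semiring R]
    [PartialOrder R] [CanonicallyOrderedAdd R] {a b c d : R} (hab : a ≤ b) (hcd : c ≤ d) :
    a * d + b * c ≤ a * c + b * d := by
  obtain ⟨e, rfl⟩ := exists_add_of_le hcd
  rw [mul_add, add_right_comm, mul_add, ← add_assoc]
  gcongr

section Chebyshev

variable {X : Type*} [MeasurableSpace X] {μ : Measure X} {s : Set X}

theorem measure_mul_setLIntegral_mul_le_of_antivaryOn {f g : X → ENNReal} (hs : MeasurableSet s)
    (hf : AEMeasurable f (μ.restrict s)) (hg : AEMeasurable g (μ.restrict s))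
    (hfg : AntivaryOn f g s) :
    μ s * ∫⁻ x in s, f x * g x ∂μ ≤ (∫⁻ x in s, f x ∂μ) * ∫⁻ x in s, g x ∂μ := by
  have rearrangement : ∀ x ∈ s, ∀ y ∈ s, f x * g x + f y * g y ≤ f x * g y + f y * g x := by
    intro x hx y hy
    rcases lt_trichotomy (g x) (g y) with hxy | hxy | hxy
    · rw [add_comm, add_comm (f x * g y)]
      exact mul_add_mul_le_mul_add_mul_of_canonicallyOrderedAdd (hfg hx hy hxy) hxy.le
    · rw [hxy]
    · exact mul_add_mul_le_mul_add_mul_of_canonicallyOrderedAdd (hfg hy hx hxy) hxy.le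
  have hfg_meas : AEMeasurable (fun x => f x * g x) (μ.restrict s) := hf.mul hg
  have double_integral : 2 * (μ s * ∫⁻ x in s, f x * g x ∂μ) ≤
      2 * ((∫⁻ x in s, f x ∂μ) * ∫⁻ x in s, g x ∂μ) :=
    calc 2 * (μ s * ∫⁻ x in s, f x * g x ∂μ)
        = ∫⁻ x in s, ∫⁻ y in s, (f x * g x + f y * g y) ∂μ ∂μ := by
          simp only [lintegral_add_left measurable_const, lintegral_const,
            Measure.restrict_apply_univ]
          rw [lintegral_add_right _ measurable_const, lintegral_mul_const'' _ hfg_meas,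
            lintegral_const, Measure.restrict_apply_univ]
          ring
      _ ≤ ∫⁻ x in s, ∫⁻ y in s, (f x * g y + f y * g x) ∂μ ∂μ :=
          setLIntegral_mono' hs fun x hx => setLIntegral_mono' hs fun y hy =>
            rearrangement x hx y hy
      _ = 2 * ((∫⁻ x in s, f x ∂μ) * ∫⁻ x in s, g x ∂μ) := by
          simp only [lintegral_add_left' (hg.const_mul _), lintegral_mul_const'' _ hf,
            lintegral_const_mul'' _ hg]
          rw [lintegral_add_left' (hf.mul_const _), lintegral_mul_const'' _ hf,
            lintegral_const_mul'' _ hg]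
          ring
  exact (ENNReal.mul_le_mul_iff_right two_ne_zero ENNReal.ofNat_ne_top).mp double_integral

variable {f g : X → ℝ}

theorem measure_mul_setLIntegral_ofReal_mul_le_of_antivaryOn (hs : MeasurableSet s)
    (hf : IntegrableOn f s μ) (hg : IntegrableOn g s μ) (hf₀ : ∀ x ∈ s, 0 ≤ f x)
    (hg₀ : ∀ x ∈ s, 0 ≤ g x) (hfg : AntivaryOn f g s) :
    μ s * ∫⁻ x in s, ENNReal.ofReal (f x * g x) ∂μ ≤
      ENNReal.ofReal ((∫ x in s, f x ∂μ) * ∫ x in s, g x ∂μ) := by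
  rw [ENNReal.ofReal_mul (setIntegral_nonneg hs hf₀),
    ofReal_integral_eq_lintegral_ofReal hf (ae_restrict_of_forall_mem hs hf₀),
    ofReal_integral_eq_lintegral_ofReal hg (ae_restrict_of_forall_mem hs hg₀),
    setLIntegral_congr_fun hs fun x hx => ENNReal.ofReal_mul (hf₀ x hx)]
  refine measure_mul_setLIntegral_mul_le_of_antivaryOn hs hf.1.aemeasurable.ennreal_ofReal
    hg.1.aemeasurable.ennreal_ofReal fun x hx y hy hxy => ?_
  exact ENNReal.ofReal_le_ofReal (hfg hx hy (ENNReal.ofReal_mono.reflect_lt hxy))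

theorem integrableOn_mul_of_antivaryOn (hs : MeasurableSet s)
    (hf : IntegrableOn f s μ) (hg : IntegrableOn g s μ) (hf₀ : ∀ x ∈ s, 0 ≤ f x)
    (hg₀ : ∀ x ∈ s, 0 ≤ g x) (hfg : AntivaryOn f g s) :
    IntegrableOn (fun x => f x * g x) s μ := by
  rcases eq_or_ne (μ s) 0 with hμ | hμ
  · rw [IntegrableOn, Measure.restrict_eq_zero.mpr hμ]
    exact integrable_zero_measure
  refine ⟨hf.1.mul hg.1, ?_⟩
  rw [hasFiniteIntegral_iff_ofReal
    (ae_restrict_of_forall_mem hs fun x hx => mul_nonneg (hf₀ x hx) (hg₀ x hx))]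
  exact ENNReal.lt_top_of_mul_ne_top_right
    ((measure_mul_setLIntegral_ofReal_mul_le_of_antivaryOn hs hf hg hf₀ hg₀ hfg).trans_lt
      ENNReal.ofReal_lt_top).ne hμ

theorem measureReal_mul_setIntegral_mul_le_of_antivaryOn (hs : MeasurableSet s)
    (hf : IntegrableOn f s μ) (hg : IntegrableOn g s μ) (hf₀ : ∀ x ∈ s, 0 ≤ f x)
    (hg₀ : ∀ x ∈ s, 0 ≤ g x) (hfg : AntivaryOn f g s) :
    μ.real s * ∫ x in s, f x * g x ∂μ ≤ (∫ x in s, f x ∂μ) * ∫ x in s, g x ∂μ := by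
  have hprod₀ : ∀ x ∈ s, 0 ≤ f x * g x := fun x hx => mul_nonneg (hf₀ x hx) (hg₀ x hx)
  rw [integral_eq_lintegral_of_nonneg_ae (ae_restrict_of_forall_mem hs hprod₀)
    (hf.1.mul hg.1), measureReal_def, ← ENNReal.toReal_mul]
  exact ENNReal.toReal_le_of_le_ofReal
    (mul_nonneg (setIntegral_nonneg hs hf₀) (setIntegral_nonneg hs hg₀))
    (measure_mul_setLIntegral_ofReal_mul_le_of_antivaryOn hs hf hg hf₀ hg₀ hfg)

end Chebyshev

section PowerWeights

variable {a b r : ℝ}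

theorem antivaryOn_sub_rpow_rpow (ha : 0 ≤ a) :
    AntivaryOn (fun s : ℝ => (b - s) ^ r) (fun s => s ^ r) (Ioo a b) := by
  rcases le_total 0 r with hr | hr
  · refine AntitoneOn.antivaryOn (fun x _ y hy hxy => ?_) (fun x hx y _ hxy => ?_)
    · exact Real.rpow_le_rpow (sub_nonneg.mpr hy.2.le) (by linarith) hr
    · exact Real.rpow_le_rpow (ha.trans hx.1.le) hxy hr
  · refine MonotoneOn.antivaryOn (fun x _ y hy hxy => ?_) (fun x hx y _ hxy => ?_)
    · exact Real.rpow_le_rpow_of_nonpos (sub_pos.mpr hy.2) (by linarith) hr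
    · exact Real.rpow_le_rpow_of_nonpos (ha.trans_lt hx.1) hxy hr

theorem integrableOn_rpow (hr : -1 < r) (a b : ℝ) :
    IntegrableOn (fun s : ℝ => s ^ r) (Ioo a b) :=
  (intervalIntegral.intervalIntegrable_rpow' hr).1.mono_set Ioo_subset_Ioc_self

theorem integrableOn_sub_rpow (hr : -1 < r) (a b : ℝ) :
    IntegrableOn (fun s : ℝ => (b - s) ^ r) (Ioo a b) := by
  have h : IntervalIntegrable (fun s : ℝ => (b - s) ^ r) volume (b - (b - a)) (b - 0) :=
    (intervalIntegral.intervalIntegrable_rpow' hr).comp_sub_left b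
  rw [sub_sub_cancel, sub_zero] at h
  exact h.1.mono_set Ioo_subset_Ioc_self

theorem setIntegral_sub_rpow (hr : -1 < r) (hab : a ≤ b) :
    ∫ s in Ioo a b, (b - s) ^ r = (b - a) ^ (r + 1) / (r + 1) := by
  rw [← integral_Ioc_eq_integral_Ioo, ← intervalIntegral.integral_of_le hab,
    intervalIntegral.integral_comp_sub_left (fun x => x ^ r), sub_self, integral_rpow (.inl hr),
    Real.zero_rpow (by linarith), sub_zero]

theorem integrableOn_sub_rpow_mul_rpow (hr : -1 < r) (ha : 0 ≤ a) :
    IntegrableOn (fun s : ℝ => (b - s) ^ r * s ^ r) (Ioo a b) :=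
  integrableOn_mul_of_antivaryOn measurableSet_Ioo (integrableOn_sub_rpow hr a b)
    (integrableOn_rpow hr a b) (fun _ hs => Real.rpow_nonneg (sub_nonneg.mpr hs.2.le) r)
    (fun _ hs => Real.rpow_nonneg (ha.trans hs.1.le) r) (antivaryOn_sub_rpow_rpow ha)

theorem setIntegral_sub_rpow_mul_rpow_le (hr : -1 < r) (ha : 0 ≤ a) (hab : a < b) :
    ∫ s in Ioo a b, (b - s) ^ r * s ^ r ≤ (b - a) ^ r / (r + 1) * ∫ s in a..b, s ^ r := by
  have hpos : 0 < b - a := sub_pos.mpr hab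
  have chebyshev := measureReal_mul_setIntegral_mul_le_of_antivaryOn measurableSet_Ioo
    (integrableOn_sub_rpow hr a b) (integrableOn_rpow hr a b)
    (fun _ hs => Real.rpow_nonneg (sub_nonneg.mpr hs.2.le) r)
    (fun _ hs => Real.rpow_nonneg (ha.trans hs.1.le) r) (antivaryOn_sub_rpow_rpow ha)
  rw [Real.volume_real_Ioo_of_le hab.le, setIntegral_sub_rpow hr hab.le,
    Real.rpow_add_one hpos.ne'] at chebyshev
  rw [intervalIntegral.integral_of_le hab.le, integral_Ioc_eq_integral_Ioo]
  refine le_of_mul_le_mul_left (chebyshev.trans_eq ?_) hpos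
  ring

end PowerWeights

/-- The summand `(s - a)^λ (b - s)^(-α) s^(-α)` of the estimated function on a cell `[a, b)` of the
partition; it is meaningful only on `(a, b)`, where all three bases are positive. -/
def cellWeight (α lam a b s : ℝ) : ℝ :=
  (s - a) ^ lam * (b - s) ^ (-α) * s ^ (-α)

section CellWeight

variable {α lam a b : ℝ}

theorem cellWeight_sq_le {s : ℝ} (hlam : 0 ≤ lam) (ha : 0 ≤ a) (hs : s ∈ Ioo a b) :
    cellWeight α lam a b s ^ 2 ≤
      (b - a) ^ (2 * lam) * ((b - s) ^ (-(2 * α)) * s ^ (-(2 * α))) := by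
  have sq_rpow : ∀ x p : ℝ, 0 ≤ x → (x ^ p) ^ 2 = x ^ (2 * p) := fun x p hx => by
    rw [mul_comm 2 p]
    exact (Real.rpow_mul_natCast hx p 2).symm
  have hsa : 0 ≤ s - a := sub_nonneg.mpr hs.1.le
  have hbs : 0 ≤ b - s := sub_nonneg.mpr hs.2.le
  have hs₀ : 0 ≤ s := ha.trans hs.1.le
  calc cellWeight α lam a b s ^ 2
      = (s - a) ^ (2 * lam) * ((b - s) ^ (-(2 * α)) * s ^ (-(2 * α))) := by
        rw [cellWeight, mul_pow, mul_pow, sq_rpow _ _ hsa, sq_rpow _ _ hbs, sq_rpow _ _ hs₀,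
          mul_neg, mul_assoc]
    _ ≤ (b - a) ^ (2 * lam) * ((b - s) ^ (-(2 * α)) * s ^ (-(2 * α))) := by
        gcongr
        exact hs.2.le

theorem measurable_cellWeight : Measurable (cellWeight α lam a b) := by
  unfold cellWeight
  fun_prop

theorem integrableOn_cellWeight_sq (hα : α < 1 / 2) (hlam : 0 ≤ lam) (ha : 0 ≤ a) :
    IntegrableOn (fun s => cellWeight α lam a b s ^ 2) (Ioo a b) := by
  refine ((integrableOn_sub_rpow_mul_rpow (r := -(2 * α)) (by linarith) ha).const_mul
    ((b - a) ^ (2 * lam))).mono' (measurable_cellWeight.pow_const 2).aestronglyMeasurable ?_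
  refine ae_restrict_of_forall_mem measurableSet_Ioo fun s hs => ?_
  rw [Real.norm_of_nonneg (sq_nonneg _)]
  exact cellWeight_sq_le hlam ha hs

theorem setIntegral_cellWeight_sq_le (hα : α < 1 / 2) (hlam : 0 ≤ lam) (ha : 0 ≤ a)
    (hab : a < b) :
    ∫ s in Ioo a b, cellWeight α lam a b s ^ 2 ≤
      (b - a) ^ (2 * (lam - α)) / (1 - 2 * α) * ∫ s in a..b, s ^ (-(2 * α)) := by
  have hr : -1 < -(2 * α) := by linarith
  have hpos : 0 < b - a := sub_pos.mpr hab
  calc ∫ s in Ioo a b, cellWeight α lam a b s ^ 2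
      ≤ ∫ s in Ioo a b, (b - a) ^ (2 * lam) * ((b - s) ^ (-(2 * α)) * s ^ (-(2 * α))) :=
        setIntegral_mono_on (integrableOn_cellWeight_sq hα hlam ha)
          ((integrableOn_sub_rpow_mul_rpow hr ha).const_mul _) measurableSet_Ioo
          fun s hs => cellWeight_sq_le hlam ha hs
    _ ≤ (b - a) ^ (2 * lam) *
          ((b - a) ^ (-(2 * α)) / (-(2 * α) + 1) * ∫ s in a..b, s ^ (-(2 * α))) := by
        rw [integral_const_mul]
        gcongr
        exact setIntegral_sub_rpow_mul_rpow_le hr ha hab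
    _ = (b - a) ^ (2 * (lam - α)) / (1 - 2 * α) * ∫ s in a..b, s ^ (-(2 * α)) := by
        rw [mul_sub, sub_eq_add_neg (2 * lam), Real.rpow_add hpos, neg_add_eq_sub]
        ring

end CellWeight

theorem pow_sum_indicator_of_pairwiseDisjoint {ι X R : Type*} [Semiring R] {t : Finset ι}
    {s : ι → Set X} (hs : (t : Set ι).PairwiseDisjoint s) (f : ι → X → R) {k : ℕ} (hk : k ≠ 0)
    (x : X) :
    (∑ i ∈ t, (s i).indicator (f i) x) ^ k = ∑ i ∈ t, (s i).indicator (fun y => f i y ^ k) x := by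
  by_cases hx : ∃ i ∈ t, x ∈ s i
  · obtain ⟨i, hi, hxi⟩ := hx
    have hne : ∀ j ∈ t, j ≠ i → x ∉ s j := fun j hj hji hxj =>
      hji (hs.elim_set hj hi x hxj hxi)
    rw [Finset.sum_eq_single_of_mem i hi fun j hj hji => indicator_of_notMem (hne j hj hji) _,
      Finset.sum_eq_single_of_mem i hi fun j hj hji => indicator_of_notMem (hne j hj hji) _,
      indicator_of_mem hxi, indicator_of_mem hxi]
  · push Not at hx
    rw [Finset.sum_eq_zero fun i hi => indicator_of_notMem (hx i hi) _,
      Finset.sum_eq_zero fun i hi => indicator_of_notMem (hx i hi) _, zero_pow hk]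

namespace Partition

variable {T : ℝ} (P : Partition T)

theorem strictMonoOn_pts : StrictMonoOn P.pts (Iic P.n) :=
  strictMonoOn_Iic_of_lt_succ P.lt

theorem pts_nonneg {i : ℕ} (hi : i ≤ P.n) : 0 ≤ P.pts i := by
  rw [← P.first]
  exact P.strictMonoOn_pts.monotoneOn (Nat.zero_le _) hi (Nat.zero_le _)

theorem sub_le_mesh {i : ℕ} (hi : i < P.n) : P.pts (i + 1) - P.pts i ≤ P.mesh :=
  Finset.le_sup' (fun i => P.pts (i + 1) - P.pts i) (Finset.mem_range.mpr hi)

theorem pairwiseDisjoint_Ico :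
    (Finset.range P.n : Set ℕ).PairwiseDisjoint fun i => Ico (P.pts i) (P.pts (i + 1)) := by
  have disjoint_of_lt : ∀ i j, i < j → j < P.n →
      Disjoint (Ico (P.pts i) (P.pts (i + 1))) (Ico (P.pts j) (P.pts (j + 1))) := by
    intro i j hij hj
    rw [Ico_disjoint_Ico]
    exact (min_le_left _ _).trans
      ((P.strictMonoOn_pts.monotoneOn (hij.trans hj) hj.le hij).trans (le_max_right _ _))
  intro i hi j hj hij
  rw [Finset.coe_range, mem_Iio] at hi hj
  rcases hij.lt_or_gt with h | h
  · exact disjoint_of_lt i j h hj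
  · exact (disjoint_of_lt j i h hi).symm

variable {α lam : ℝ}

theorem integrable_indicator_cellWeight_sq (hα : α < 1 / 2) (hlam : 0 ≤ lam) {i : ℕ}
    (hi : i < P.n) :
    Integrable ((Ico (P.pts i) (P.pts (i + 1))).indicator
      fun s => cellWeight α lam (P.pts i) (P.pts (i + 1)) s ^ 2) := by
  rw [integrable_indicator_iff measurableSet_Ico, integrableOn_Ico_iff_integrableOn_Ioo]
  exact integrableOn_cellWeight_sq hα hlam (P.pts_nonneg hi.le)

theorem integral_indicator_cellWeight_sq_le (hα : α < 1 / 2) (hlam : 0 ≤ lam) (hαlam : α ≤ lam)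
    {i : ℕ} (hi : i < P.n) :
    ∫ s, (Ico (P.pts i) (P.pts (i + 1))).indicator
        (fun s => cellWeight α lam (P.pts i) (P.pts (i + 1)) s ^ 2) s ≤
      P.mesh ^ (2 * (lam - α)) / (1 - 2 * α) *
        ∫ s in P.pts i..P.pts (i + 1), s ^ (-(2 * α)) := by
  have hstep : 0 ≤ P.pts (i + 1) - P.pts i := sub_nonneg.mpr (P.lt i hi).le
  have hint₀ : 0 ≤ ∫ s in P.pts i..P.pts (i + 1), s ^ (-(2 * α)) :=
    intervalIntegral.integral_nonneg (P.lt i hi).le fun s hs =>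
      Real.rpow_nonneg ((P.pts_nonneg hi.le).trans hs.1) _
  rw [integral_indicator measurableSet_Ico, integral_Ico_eq_integral_Ioo]
  refine (setIntegral_cellWeight_sq_le hα hlam (P.pts_nonneg hi.le) (P.lt i hi)).trans ?_
  gcongr
  · linarith
  · exact P.sub_le_mesh hi

theorem sum_integral_rpow {r : ℝ} (hr : -1 < r) :
    ∑ i ∈ Finset.range P.n, ∫ s in P.pts i..P.pts (i + 1), s ^ r = T ^ (r + 1) / (r + 1) := by
  rw [intervalIntegral.sum_integral_adjacent_intervals fun _ _ =>
      intervalIntegral.intervalIntegrable_rpow' hr,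
    P.first, P.last, integral_rpow (.inl hr), Real.zero_rpow (by linarith), sub_zero]

end Partition

theorem xi_one_L2_estimate_general {T α lam : ℝ} (hα : α < 1 / 2) (hlam : 0 ≤ lam)
    (hαlam : α ≤ lam) (P : Partition T) :
    IntervalIntegrable (fun s =>
        (∑ i ∈ Finset.range P.n,
          (Ico (P.pts i) (P.pts (i + 1))).indicator
            (fun s' => (s' - P.pts i) ^ lam * (P.pts (i + 1) - s') ^ (-α) * s' ^ (-α)) s) ^ 2)
      volume 0 T ∧
    (∫ s in (0:ℝ)..T,
        (∑ i ∈ Finset.range P.n,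
          (Ico (P.pts i) (P.pts (i + 1))).indicator
            (fun s' => (s' - P.pts i) ^ lam * (P.pts (i + 1) - s') ^ (-α) * s' ^ (-α)) s) ^ 2) ≤
      T ^ (1 - 2 * α) / (1 - 2 * α) ^ 2 * P.mesh ^ (2 * (lam - α)) := by
  simp only [pow_sum_indicator_of_pairwiseDisjoint P.pairwiseDisjoint_Ico _ two_ne_zero]
  set w : ℕ → ℝ → ℝ := fun i => (Ico (P.pts i) (P.pts (i + 1))).indicator
    fun s => cellWeight α lam (P.pts i) (P.pts (i + 1)) s ^ 2
  have hw : ∀ i ∈ Finset.range P.n, Integrable (w i) := fun i hi =>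
    P.integrable_indicator_cellWeight_sq hα hlam (Finset.mem_range.mp hi)
  have hsum : Integrable fun s => ∑ i ∈ Finset.range P.n, w i s := integrable_finsetSum _ hw
  have hT : 0 ≤ T := P.last ▸ P.pts_nonneg le_rfl
  refine ⟨hsum.intervalIntegrable, ?_⟩
  calc ∫ s in (0:ℝ)..T, ∑ i ∈ Finset.range P.n, w i s
      ≤ ∫ s, ∑ i ∈ Finset.range P.n, w i s := by
        rw [intervalIntegral.integral_of_le hT]
        exact setIntegral_le_integral hsum (.of_forall fun s => Finset.sum_nonneg fun i _ =>
          indicator_nonneg (fun _ _ => sq_nonneg _) s)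
    _ = ∑ i ∈ Finset.range P.n, ∫ s, w i s := integral_finsetSum _ hw
    _ ≤ ∑ i ∈ Finset.range P.n, P.mesh ^ (2 * (lam - α)) / (1 - 2 * α) *
          ∫ s in P.pts i..P.pts (i + 1), s ^ (-(2 * α)) :=
        Finset.sum_le_sum fun i hi =>
          P.integral_indicator_cellWeight_sq_le hα hlam hαlam (Finset.mem_range.mp hi)
    _ = T ^ (1 - 2 * α) / (1 - 2 * α) ^ 2 * P.mesh ^ (2 * (lam - α)) := by
        rw [← Finset.mul_sum, P.sum_integral_rpow (by linarith), neg_add_eq_sub, sq, ← div_div]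
        ring

/-- estimate (2.9): there is a constant `C = C(λ, α, T)` such that for
every partition `π` of `[0,T]`,
`∫_0^T [Σ_i 1_{[s_i,s_{i+1})}(s) (s−s_i)^λ (s_{i+1}−s)^{−α} s^{−α}]² ds ≤ C ‖π‖^{2(λ−α)}`. -/
theorem xi_one_L2_estimate (T α lam : ℝ) (hT : 0 < T) (hα : 0 ≤ α) (hα' : α < 1 / 4)
    (hαlam : α < lam) (hlam' : lam ≤ 1) :
    ∃ C : ℝ, ∀ P : Partition T,
      (∫ s in (0:ℝ)..T,
          (∑ i ∈ Finset.range P.n,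
            (Ico (P.pts i) (P.pts (i + 1))).indicator
              (fun s' => (s' - P.pts i) ^ lam * (P.pts (i + 1) - s') ^ (-α) * s' ^ (-α))
              s) ^ 2) ≤
        C * P.mesh ^ (2 * (lam - α)) := by
  exact ⟨_, fun P =>
    (xi_one_L2_estimate_general (by linarith) (hα.trans hαlam.le) hαlam.le P).2⟩

end YS
end
end
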